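/- Let X = {1,2} and define, by mutual recursion on words over X, the maps a and b from X* to itself: a(∅) = ∅, a(1w) = 1·b(w), a(2w) = 2·w; b(∅) = ∅, b(1w) = 2·a(w), b(2w) = 1·w. Then a and b are automorphisms of the rooted binary tree T(X) (length- and prefix-preserving bijections of X*), and the Basilica group B, defined as the subgroup of Aut(T(X)) generated by a and b, is amenable: B satisfies Reiter's condition, i.e. there exists a sequence (λ_n) of probability measures on B with ‖gλ_n − λ_n‖ → 0 for every g ∈ B. -/

import Mathlib

open Filter Topology

/-- The automorphism group of the rooted homogeneous tree `T(X)` on the vertex set `X*`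
of finite words over `X`: permutations of `X*` preserving word length and preserving the
prefix relation in both directions, as a subgroup of `Equiv.Perm (List X)`. -/
def treeAutSubgroup (X : Type*) : Subgroup (Equiv.Perm (List X)) where
  carrier := {f | (∀ w, (f w).length = w.length) ∧
    ∀ w w', w <+: w' ↔ f w <+: f w'}
  one_mem' := ⟨fun _ => rfl, fun _ _ => Iff.rfl⟩
  mul_mem' := by
    rintro f g ⟨hf1, hf2⟩ ⟨hg1, hg2⟩
    refine ⟨fun w => ?_, fun w w' => ?_⟩
    · simpa using (hf1 (g w)).trans (hg1 w)
    · simpa using (hg2 w w').trans (hf2 (g w) (g w'))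
  inv_mem' := by
    rintro f ⟨hf1, hf2⟩
    refine ⟨fun w => ?_, fun w w' => ?_⟩
    · have := hf1 (f⁻¹ w)
      simpa using this.symm
    · have := hf2 (f⁻¹ w) (f⁻¹ w')
      simpa using this.symm

/-- The group of automorphisms of the rooted tree `T(X)`. -/
abbrev TreeAut (X : Type*) := ↥(treeAutSubgroup X)

mutual
  /-- The first generator `a` of the Basilica group, acting on words over the two-letter
  alphabet `{1,2} ≃ Fin 2` by the wreath recursion `a(1w) = 1·b(w)`, `a(2w) = 2·w`. -/
  def basilicaA : List (Fin 2) → List (Fin 2)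
    | [] => []
    | x :: w => if x = 0 then 0 :: basilicaB w else 1 :: w
  /-- The second generator `b` of the Basilica group, acting by the wreath recursion
  `b(1w) = 2·a(w)`, `b(2w) = 1·w`. -/
  def basilicaB : List (Fin 2) → List (Fin 2)
    | [] => []
    | x :: w => if x = 0 then 1 :: basilicaA w else 0 :: w
end

/-- A probability measure on a countable discrete group `G`:
a nonnegative function summing to `1`. -/
def IsProbMeasure {G : Type*} (μ : G → ℝ) : Prop :=
  (∀ g, 0 ≤ μ g) ∧ HasSum μ 1

/-- Reiter's condition: there is a sequence of probability measures `λ_n` on `G` with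
`‖g λ_n − λ_n‖ → 0` for every `g ∈ G` (ℓ¹ norm). -/
def ReiterCondition (G : Type*) [Group G] : Prop :=
  ∃ lam : ℕ → G → ℝ, (∀ n, IsProbMeasure (lam n)) ∧
    ∀ g : G, Tendsto (fun n => ∑' h, |lam n (g⁻¹ * h) - lam n h|) atTop (𝓝 0)

lemma basilica_length (w : List (Fin 2)) :
    (basilicaA w).length = w.length ∧ (basilicaB w).length = w.length := by
  induction w with
  | nil => simp [basilicaA, basilicaB]
  | cons x w ih => fin_cases x <;> simp [basilicaA, basilicaB, ih]

lemma basilica_prefix_iff (w w' : List (Fin 2)) :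
    (w <+: w' ↔ basilicaA w <+: basilicaA w') ∧ (w <+: w' ↔ basilicaB w <+: basilicaB w') := by
  induction w generalizing w' with
  | nil => simp [basilicaA, basilicaB]
  | cons x w ih =>
    cases w' with
    | nil => fin_cases x <;> simp [basilicaA, basilicaB]
    | cons y w' =>
      have h := ih w'
      fin_cases x <;> fin_cases y <;>
        simp [basilicaA, basilicaB, List.cons_prefix_cons, ← h.1, ← h.2]

lemma injective_of_prefix_iff {X : Type*} {f : List X → List X}
    (hlen : ∀ w, (f w).length = w.length) (hpre : ∀ w w', w <+: w' ↔ f w <+: f w') :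
    Function.Injective f := fun w w' h =>
  ((hpre w w').2 (h ▸ List.prefix_rfl)).eq_of_length (by rw [← hlen w, ← hlen w', h])

lemma basilicaA_injective : Function.Injective basilicaA :=
  injective_of_prefix_iff (fun w => (basilica_length w).1) fun w w' => (basilica_prefix_iff w w').1

lemma basilicaB_injective : Function.Injective basilicaB :=
  injective_of_prefix_iff (fun w => (basilica_length w).2) fun w w' => (basilica_prefix_iff w w').2

lemma basilica_surjective (w : List (Fin 2)) :
    (∃ v, basilicaA v = w) ∧ (∃ v, basilicaB v = w) := by
  induction w with
  | nil => exact ⟨⟨[], by simp [basilicaA]⟩, ⟨[], by simp [basilicaB]⟩⟩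
  | cons x w ih =>
    obtain ⟨⟨u, hu⟩, ⟨v, hv⟩⟩ := ih
    fin_cases x
    · exact ⟨⟨0 :: v, by simp [basilicaA, hv]⟩, ⟨1 :: w, by simp [basilicaB]⟩⟩
    · exact ⟨⟨1 :: w, by simp [basilicaA]⟩, ⟨0 :: u, by simp [basilicaB, hu]⟩⟩

/-- A surjection of `X*` which preserves length and the prefix relation, as a tree
automorphism. -/
noncomputable def TreeAut.ofSurjective {X : Type*} (f : List X → List X)
    (hlen : ∀ w, (f w).length = w.length) (hpre : ∀ w w', w <+: w' ↔ f w <+: f w')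
    (hsurj : Function.Surjective f) : TreeAut X :=
  ⟨Equiv.ofBijective f ⟨injective_of_prefix_iff hlen hpre, hsurj⟩, hlen, hpre⟩

/-- The second difference of `U` in the direction of `s`. -/
def secondDiff {G : Type*} [Group G] (s : G) (U : G → ℝ) (g : G) : ℝ :=
  U (s * g) + U (s⁻¹ * g) - 2 * U g

section Weights

variable {G : Type*} [Group G] {a b : G}

/-- The discounted `n`-step distribution of the simple random walk on the group with
generators `a`, `b`; its total mass is `2⁻ⁿ`. -/
noncomputable def discountedWalk (a b : G) : ℕ → G → ℝ
  | 0 => Set.indicator {1} 1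
  | n + 1 => fun g => (discountedWalk a b n (a * g) + discountedWalk a b n (a⁻¹ * g) +
      discountedWalk a b n (b * g) + discountedWalk a b n (b⁻¹ * g)) / 8

lemma discountedWalk_nonneg (n : ℕ) (g : G) : 0 ≤ discountedWalk a b n g := by
  induction n generalizing g with
  | zero => exact Set.indicator_nonneg (fun _ _ => zero_le_one) g
  | succ n ih =>
    simp only [discountedWalk]
    have h₁ := ih (a * g)
    have h₂ := ih (a⁻¹ * g)
    have h₃ := ih (b * g)
    have h₄ := ih (b⁻¹ * g)
    positivity

lemma hasSum_mul_left {f : G → ℝ} {c : ℝ} (hf : HasSum f c) (s : G) :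
    HasSum (fun g => f (s * g)) c :=
  (Equiv.mulLeft s).hasSum_iff.2 hf

lemma hasSum_discountedWalk (n : ℕ) :
    HasSum (discountedWalk a b n) ((1 / 2 : ℝ) ^ n) := by
  induction n with
  | zero =>
    have h := hasSum_single (f := discountedWalk a b 0) (1 : G)
      (fun g hg => by simp [discountedWalk, hg])
    simpa [discountedWalk] using h
  | succ n ih =>
    have h := ((((hasSum_mul_left ih a).add (hasSum_mul_left ih a⁻¹)).add
      (hasSum_mul_left ih b)).add (hasSum_mul_left ih b⁻¹)).div_const 8
    have e : ((1 / 2 : ℝ) ^ n + (1 / 2) ^ n + (1 / 2) ^ n + (1 / 2) ^ n) / 8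
        = (1 / 2) ^ (n + 1) := by ring
    rw [e] at h
    exact h

/-- On a group generated by two elements there is a function with summable exponential decay
whose second differences in the direction of the generators are bounded. -/
lemma exists_summable_exp_secondDiff_le (hgen : Subgroup.closure {a, b} = ⊤) :
    ∃ (U : G → ℝ) (K : ℝ), Summable (fun g => Real.exp (-U g)) ∧
      ∀ g, secondDiff a U g + secondDiff b U g ≤ K := by
  have hsum : Summable (fun p : G × ℕ => discountedWalk a b p.2 p.1) := by
    have h : Summable (fun p : ℕ × G => discountedWalk a b p.1 p.2) := by
      rw [summable_prod_of_nonneg (fun p => discountedWalk_nonneg _ _)]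
      refine ⟨fun n => (hasSum_discountedWalk n).summable, ?_⟩
      simp only [(hasSum_discountedWalk _).tsum_eq]
      exact summable_geometric_of_lt_one (by norm_num) (by norm_num)
    exact (Equiv.prodComm G ℕ).summable_iff.2 h
  have hsum' := (summable_prod_of_nonneg (fun p => discountedWalk_nonneg _ _)).1 hsum
  set W : G → ℝ := fun g => ∑' n, discountedWalk a b n g with hW
  have hWsum : Summable W := hsum'.2
  have hs : ∀ g, Summable (fun n => discountedWalk a b n g) := hsum'.1
  have hW0 : ∀ g, 0 ≤ W g := fun g => tsum_nonneg fun n => discountedWalk_nonneg n g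
  have hrec : ∀ g, W g = discountedWalk a b 0 g +
      (W (a * g) + W (a⁻¹ * g) + W (b * g) + W (b⁻¹ * g)) / 8 := by
    intro g
    have h := ((((hs (a * g)).hasSum.add (hs (a⁻¹ * g)).hasSum).add
      (hs (b * g)).hasSum).add (hs (b⁻¹ * g)).hasSum).div_const 8
    rw [hW]
    simp only
    rw [(hs g).tsum_eq_zero_add]
    congr 1
    exact h.tsum_eq
  have hle : ∀ g, W (a * g) ≤ 8 * W g ∧ W (a⁻¹ * g) ≤ 8 * W g ∧
      W (b * g) ≤ 8 * W g ∧ W (b⁻¹ * g) ≤ 8 * W g := by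
    intro g
    have h := hrec g
    have h₀ := discountedWalk_nonneg (a := a) (b := b) 0 g
    have h₁ := hW0 (a * g)
    have h₂ := hW0 (a⁻¹ * g)
    have h₃ := hW0 (b * g)
    have h₄ := hW0 (b⁻¹ * g)
    refine ⟨?_, ?_, ?_, ?_⟩ <;> linarith
  have hge : ∀ g, W g ≤ 8 * W (a * g) ∧ W g ≤ 8 * W (a⁻¹ * g) ∧
      W g ≤ 8 * W (b * g) ∧ W g ≤ 8 * W (b⁻¹ * g) := by
    intro g
    refine ⟨?_, ?_, ?_, ?_⟩
    · simpa using (hle (a * g)).2.1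
    · simpa using (hle (a⁻¹ * g)).1
    · simpa using (hle (b * g)).2.2.2
    · simpa using (hle (b⁻¹ * g)).2.2.1
  have hpos : ∀ g, 0 < W g := by
    intro g
    have hg : g ∈ Subgroup.closure {a, b} := hgen ▸ Subgroup.mem_top g
    induction hg using Subgroup.closure_induction_left with
    | one =>
      have h := hrec 1
      have h₀ : discountedWalk a b 0 1 = 1 := by simp [discountedWalk]
      have h₁ := hW0 (a * 1)
      have h₂ := hW0 (a⁻¹ * 1)
      have h₃ := hW0 (b * 1)
      have h₄ := hW0 (b⁻¹ * 1)
      linarith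
    | mul_left s hs g _ ih =>
      rcases hs with rfl | rfl
      · linarith [(hge g).1]
      · linarith [(hge g).2.2.1]
    | inv_mul_cancel s hs g _ ih =>
      rcases hs with rfl | rfl
      · linarith [(hge g).2.1]
      · linarith [(hge g).2.2.2]
  have hlog : ∀ g h, W g ≤ 8 * W h → -Real.log (W h) ≤ -Real.log (W g) + Real.log 8 := by
    intro g h hgh
    have := Real.log_le_log (hpos g) hgh
    rw [Real.log_mul (by norm_num) (hpos h).ne'] at this
    linarith
  refine ⟨fun g => -Real.log (W g), 4 * Real.log 8, ?_, fun g => ?_⟩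
  · simpa [Real.exp_log (hpos _)] using hWsum
  · obtain ⟨h₁, h₂, h₃, h₄⟩ := hge g
    have h₁ := hlog _ _ h₁
    have h₂ := hlog _ _ h₂
    have h₃ := hlog _ _ h₃
    have h₄ := hlog _ _ h₄
    simp only [secondDiff]
    linarith

/-- Superposition of `U` along a wreath recursion `g ↦ (x, y)` for which
`a g ↦ (b x, y)` and `b g ↦ (y, a x)`: it keeps exponential summability, and it turns a bound on
the drift with rates `(q / 2, p)` into the same bound on the drift with rates `(p, q)`. -/
lemma exists_lift_secondDiff {x y : G → G} {s : G → Bool}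
    (hinj : ∀ g h, x g = x h → y g = y h → s g = s h → g = h)
    (hxa : ∀ g, x (a * g) = b * x g) (hya : ∀ g, y (a * g) = y g)
    (hxb : ∀ g, x (b * g) = y g) (hyb : ∀ g, y (b * g) = a * x g)
    {U : G → ℝ} (hU : Summable (fun g => Real.exp (-U g))) (p q ε : ℝ)
    (hdrift : ∀ g, q / 2 * secondDiff a U g + p * secondDiff b U g ≤ ε) :
    ∃ V : G → ℝ, Summable (fun g => Real.exp (-V g)) ∧
      ∀ g, p * secondDiff a V g + q * secondDiff b V g ≤ ε := by
  have hxa' : ∀ g, x (a⁻¹ * g) = b⁻¹ * x g := fun g => by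
    rw [eq_inv_mul_iff_mul_eq, ← hxa, mul_inv_cancel_left]
  have hya' : ∀ g, y (a⁻¹ * g) = y g := fun g => by
    rw [← hya (a⁻¹ * g), mul_inv_cancel_left]
  have hyb' : ∀ g, y (b⁻¹ * g) = x g := fun g => by
    rw [← hxb (b⁻¹ * g), mul_inv_cancel_left]
  have hxb' : ∀ g, x (b⁻¹ * g) = a⁻¹ * y g := fun g => by
    rw [eq_inv_mul_iff_mul_eq, ← hyb, mul_inv_cancel_left]
  refine ⟨fun g => U (x g) + (U (y g) + U (a⁻¹ * y g)) / 2, ?_, fun g => ?_⟩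
  · have hU' : Summable (fun g => Real.exp (-U (a⁻¹ * g))) :=
      (Equiv.mulLeft a⁻¹).summable_iff.2 hU
    have h₁ : Summable (fun z : G × G =>
        Real.exp (-U z.1) * (Real.exp (-U z.2) + Real.exp (-U (a⁻¹ * z.2)))) :=
      hU.mul_of_nonneg (hU.add hU') (fun _ => (Real.exp_pos _).le) (fun _ => by positivity)
    have h₂ : Summable (fun z : (G × G) × Bool =>
        Real.exp (-U z.1.1) * (Real.exp (-U z.1.2) + Real.exp (-U (a⁻¹ * z.1.2)))) := by
      rw [summable_prod_of_nonneg (fun _ => by positivity)]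
      refine ⟨fun _ => Summable.of_finite, ?_⟩
      simpa using h₁.mul_left 2
    have hinj' : Function.Injective (fun g => ((x g, y g), s g)) := by
      intro g h hgh
      simp only [Prod.mk.injEq] at hgh
      exact hinj g h hgh.1.1 hgh.1.2 hgh.2
    refine Summable.of_nonneg_of_le (fun _ => (Real.exp_pos _).le) (fun g => ?_)
      (h₂.comp_injective hinj')
    simp only [Function.comp]
    rw [neg_add, Real.exp_add]
    gcongr
    rcases le_total (U (y g)) (U (a⁻¹ * y g)) with h | h
    · refine le_trans (Real.exp_le_exp.2 ?_) (le_add_of_nonneg_right (Real.exp_pos _).le)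
      linarith
    · refine le_trans (Real.exp_le_exp.2 ?_) (le_add_of_nonneg_left (Real.exp_pos _).le)
      linarith
  · have h := hdrift (x g)
    simp only [secondDiff, hxa, hya, hxb, hyb, hxa', hya', hxb', hyb', inv_mul_cancel_left] at h ⊢
    linarith

lemma exists_secondDiff_le {x y : G → G} {s : G → Bool} (hgen : Subgroup.closure {a, b} = ⊤)
    (hinj : ∀ g h, x g = x h → y g = y h → s g = s h → g = h)
    (hxa : ∀ g, x (a * g) = b * x g) (hya : ∀ g, y (a * g) = y g)
    (hxb : ∀ g, x (b * g) = y g) (hyb : ∀ g, y (b * g) = a * x g)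
    {ε : ℝ} (hε : 0 < ε) :
    ∃ U : G → ℝ, Summable (fun g => Real.exp (-U g)) ∧
      ∀ g, secondDiff a U g + secondDiff b U g ≤ ε := by
  obtain ⟨U₀, K, hU₀, hK⟩ := exists_summable_exp_secondDiff_le hgen
  have key : ∀ n : ℕ, ∃ U : G → ℝ, Summable (fun g => Real.exp (-U g)) ∧
      ∀ g, secondDiff a U g + secondDiff b U g ≤ (1 / 2) ^ n * K := by
    intro n
    induction n with
    | zero => exact ⟨U₀, hU₀, by simpa using hK⟩
    | succ n ih =>
      obtain ⟨U, hU, hd⟩ := ih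
      obtain ⟨V, hV, hdV⟩ := exists_lift_secondDiff hinj hxa hya hxb hyb hU (1 / 2) 1
        ((1 / 2) ^ (n + 1) * K) (fun g => by rw [pow_succ]; linarith [hd g])
      obtain ⟨V', hV', hdV'⟩ := exists_lift_secondDiff hinj hxa hya hxb hyb hV 1 1
        ((1 / 2) ^ (n + 1) * K) (fun g => hdV g)
      exact ⟨V', hV', fun g => by linarith [hdV' g]⟩
  have hlim : Tendsto (fun n : ℕ => (1 / 2 : ℝ) ^ n * K) atTop (𝓝 0) := by
    simpa using (tendsto_pow_atTop_nhds_zero_of_lt_one (r := (1 / 2 : ℝ))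
      (by norm_num) (by norm_num)).mul_const K
  obtain ⟨n, hn⟩ := (hlim.eventually_lt_const hε).exists
  obtain ⟨U, hU, hd⟩ := key n
  exact ⟨U, hU, fun g => (hd g).trans hn.le⟩

end Weights

section Reiter

variable {G : Type*} [Group G] {a b : G}

lemma abs_exp_sub_exp_le {u v t : ℝ} (ht : 0 < t) :
    |Real.exp (-u) - Real.exp (-v)| ≤
      (Real.exp (-(u / 2)) - Real.exp (-(v / 2))) ^ 2 / (2 * t) +
        t * (Real.exp (-u) + Real.exp (-v)) := by
  have h : ∀ w : ℝ, Real.exp (-w) = Real.exp (-(w / 2)) ^ 2 := fun w => by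
    rw [← Real.exp_nat_mul]; congr 1; push_cast; ring
  rw [h u, h v]
  set α := Real.exp (-(u / 2))
  set β := Real.exp (-(v / 2))
  rw [show α ^ 2 - β ^ 2 = (α - β) * (α + β) by ring, abs_mul, ← sq_abs (α - β)]
  have h₁ : |α + β| ^ 2 ≤ 2 * (α ^ 2 + β ^ 2) := by
    rw [sq_abs]; nlinarith [sq_nonneg (α - β)]
  set d := |α - β|
  set e := |α + β|
  have h₂ : d * e ≤ d ^ 2 / (2 * t) + t / 2 * e ^ 2 := by
    have h₃ : d ^ 2 / (2 * t) + t / 2 * e ^ 2 - d * e = (d - t * e) ^ 2 / (2 * t) := by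
      field_simp; ring
    have h₄ : 0 ≤ (d - t * e) ^ 2 / (2 * t) := by positivity
    linarith
  nlinarith

lemma sq_exp_sub_exp (u v : ℝ) :
    (Real.exp (-(u / 2)) - Real.exp (-(v / 2))) ^ 2 ≤
      Real.exp (-u) + Real.exp (-v) - 2 * (1 - (u - v) / 2) * Real.exp (-v) := by
  have h : ∀ w : ℝ, Real.exp (-w) = Real.exp (-(w / 2)) ^ 2 := fun w => by
    rw [← Real.exp_nat_mul]; congr 1; push_cast; ring
  have h₁ : Real.exp (-(u / 2)) = Real.exp (-((u - v) / 2)) * Real.exp (-(v / 2)) := by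
    rw [← Real.exp_add]; congr 1; ring
  have h₂ := Real.add_one_le_exp (-((u - v) / 2))
  have h₃ := mul_le_mul_of_nonneg_right h₂ (sq_nonneg (Real.exp (-(v / 2))))
  rw [h u, h v, sub_sq, h₁]
  linarith

/-- A function with summable exponential decay and small second differences in the direction
of the generators yields an almost invariant probability measure. -/
lemma exists_isProbMeasure_tsum_le {U : G → ℝ} (hU : Summable (fun g => Real.exp (-U g)))
    {t : ℝ} (ht : 0 < t) (hd : ∀ g, secondDiff a U g + secondDiff b U g ≤ t ^ 2) :
    ∃ lam : G → ℝ, IsProbMeasure lam ∧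
      ∀ s ∈ ({a, b} : Set G), ∑' h, |lam (s⁻¹ * h) - lam h| ≤ 3 * t := by
  wlog hU1 : HasSum (fun g => Real.exp (-U g)) 1 generalizing U
  · have hZ : 0 < ∑' g, Real.exp (-U g) := hU.tsum_pos (fun _ => (Real.exp_pos _).le) 1
      (Real.exp_pos _)
    have hs : HasSum (fun g => Real.exp (-(U g + Real.log (∑' g, Real.exp (-U g))))) 1 := by
      have h := hU.hasSum.div_const (∑' g, Real.exp (-U g))
      rw [div_self hZ.ne'] at h
      have e : ∀ g, Real.exp (-(U g + Real.log (∑' g, Real.exp (-U g)))) =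
          Real.exp (-U g) / ∑' g, Real.exp (-U g) := fun g => by
        rw [neg_add, Real.exp_add, Real.exp_neg (Real.log _), Real.exp_log hZ, div_eq_mul_inv]
      simpa only [e] using h
    refine this hs.summable (fun g => ?_) hs
    have h := hd g
    simp only [secondDiff] at h ⊢
    linarith
  set lam : G → ℝ := fun g => Real.exp (-U g) with hlam
  have hD := ((((hasSum_mul_left hU1 a).add (hasSum_mul_left hU1 a⁻¹)).add
    (hasSum_mul_left hU1 b)).add (hasSum_mul_left hU1 b⁻¹)).add (hU1.mul_left (t ^ 2 - 4))
  have hbound : ∀ s ∈ ({a, b} : Set G), ∀ g, |lam (s⁻¹ * g) - lam g| ≤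
      (lam (a * g) + lam (a⁻¹ * g) + lam (b * g) + lam (b⁻¹ * g) + (t ^ 2 - 4) * lam g) / (2 * t)
        + t * (lam (s⁻¹ * g) + lam g) := by
    intro s hs g
    refine (abs_exp_sub_exp_le ht).trans ?_
    gcongr
    have h₁ := sq_exp_sub_exp (U (a * g)) (U g)
    have h₂ := sq_exp_sub_exp (U (a⁻¹ * g)) (U g)
    have h₃ := sq_exp_sub_exp (U (b * g)) (U g)
    have h₄ := sq_exp_sub_exp (U (b⁻¹ * g)) (U g)
    have h₅ := mul_le_mul_of_nonneg_right (hd g) (Real.exp_pos (-U g)).le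
    simp only [secondDiff] at h₅
    have e₁ := sq_nonneg (Real.exp (-(U (a * g) / 2)) - Real.exp (-(U g / 2)))
    have e₂ := sq_nonneg (Real.exp (-(U (a⁻¹ * g) / 2)) - Real.exp (-(U g / 2)))
    have e₃ := sq_nonneg (Real.exp (-(U (b * g) / 2)) - Real.exp (-(U g / 2)))
    have e₄ := sq_nonneg (Real.exp (-(U (b⁻¹ * g) / 2)) - Real.exp (-(U g / 2)))
    simp only [hlam]
    rcases hs with rfl | rfl <;> linarith
  refine ⟨lam, ⟨fun g => (Real.exp_pos _).le, hU1⟩, fun s hs => ?_⟩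
  have hS := (hD.div_const (2 * t)).add (((hasSum_mul_left hU1 s⁻¹).add hU1).mul_left t)
  have hsummable := Summable.of_nonneg_of_le (fun _ => abs_nonneg _) (hbound s hs) hS.summable
  have h := hasSum_le (hbound s hs) hsummable.hasSum hS
  refine h.trans ?_
  have e : (1 + 1 + 1 + 1 + (t ^ 2 - 4) * 1) / (2 * t) + t * (1 + 1) = 5 / 2 * t := by
    field_simp; ring
  rw [e]
  linarith

lemma tendsto_tsum_abs_sub_of_closure {S : Set G} (hgen : Subgroup.closure S = ⊤)
    {lam : ℕ → G → ℝ} (hlam : ∀ n, Summable (lam n))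
    (hS : ∀ s ∈ S, Tendsto (fun n => ∑' h, |lam n (s⁻¹ * h) - lam n h|) atTop (𝓝 0)) (g : G) :
    Tendsto (fun n => ∑' h, |lam n (g⁻¹ * h) - lam n h|) atTop (𝓝 0) := by
  have hl : ∀ n (s : G), Summable (fun h => lam n (s * h)) := fun n s =>
    (Equiv.mulLeft s).summable_iff.2 (hlam n)
  have hg : g ∈ Subgroup.closure S := hgen ▸ Subgroup.mem_top g
  induction hg using Subgroup.closure_induction with
  | mem s hs => exact hS s hs
  | one => simp
  | mul g₁ g₂ _ _ ih₁ ih₂ =>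
    have h₀ := ih₁.add ih₂
    rw [add_zero] at h₀
    refine squeeze_zero (fun n => tsum_nonneg fun _ => abs_nonneg _) (fun n => ?_) h₀
    have e₁ := ((hl n g₁⁻¹).sub (hlam n)).abs
    have e₂ := ((hl n g₂⁻¹).sub (hlam n)).abs
    have e₂' : HasSum (fun h => |lam n (g₂⁻¹ * (g₁⁻¹ * h)) - lam n (g₁⁻¹ * h)|)
        (∑' h, |lam n (g₂⁻¹ * h) - lam n h|) := hasSum_mul_left e₂.hasSum g₁⁻¹
    refine hasSum_le (fun h => ?_) ((hl n (g₁ * g₂)⁻¹).sub (hlam n)).abs.hasSum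
      (e₁.hasSum.add e₂')
    rw [mul_inv_rev, mul_assoc, add_comm]
    exact abs_sub_le _ _ _
  | inv g _ ih =>
    refine ih.congr fun n => ?_
    rw [← (Equiv.mulLeft g).tsum_eq]
    refine tsum_congr fun h => ?_
    simp [abs_sub_comm]

/-- If there are functions with summable exponential decay and arbitrarily small second
differences in the direction of the generators, then Reiter's condition holds. -/
lemma reiterCondition_of_secondDiff (hgen : Subgroup.closure {a, b} = ⊤)
    (h : ∀ ε : ℝ, 0 < ε → ∃ U : G → ℝ, Summable (fun g => Real.exp (-U g)) ∧
      ∀ g, secondDiff a U g + secondDiff b U g ≤ ε) : ReiterCondition G := by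
  have key : ∀ n : ℕ, ∃ lam : G → ℝ, IsProbMeasure lam ∧
      ∀ s ∈ ({a, b} : Set G), ∑' h, |lam (s⁻¹ * h) - lam h| ≤ 3 * (1 / ((n : ℝ) + 1)) := by
    intro n
    have ht : (0 : ℝ) < 1 / ((n : ℝ) + 1) := by positivity
    obtain ⟨U, hU, hd⟩ := h ((1 / ((n : ℝ) + 1)) ^ 2) (by positivity)
    exact exists_isProbMeasure_tsum_le hU ht hd
  choose lam hlam hle using key
  refine ⟨lam, hlam, tendsto_tsum_abs_sub_of_closure hgen (fun n => (hlam n).2.summable)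
    fun s hs => ?_⟩
  refine squeeze_zero (fun n => tsum_nonneg fun _ => abs_nonneg _) (fun n => hle n s hs) ?_
  simpa using (tendsto_one_div_add_atTop_nhds_zero_nat (𝕜 := ℝ)).const_mul 3

/-- Reiter's condition for a group with generators `a`, `b` and a faithful wreath recursion
`a ↦ (b, 1)`, `b ↦ (a, 1)σ`; the sections `x g`, `y g` are indexed by their target letter. -/
lemma reiterCondition_of_wreathRecursion {x y : G → G} {s : G → Bool}
    (hgen : Subgroup.closure {a, b} = ⊤)
    (hinj : ∀ g h, x g = x h → y g = y h → s g = s h → g = h)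
    (hxa : ∀ g, x (a * g) = b * x g) (hya : ∀ g, y (a * g) = y g)
    (hxb : ∀ g, x (b * g) = y g) (hyb : ∀ g, y (b * g) = a * x g) : ReiterCondition G :=
  reiterCondition_of_secondDiff hgen fun _ hε =>
    exists_secondDiff_le hgen hinj hxa hya hxb hyb hε

end Reiter

/-- `x` and `y` are the sections of the tree automorphism `g` landing in the subtrees of the
letters `0` and `1`; `s` tells whether `g` exchanges these subtrees. -/
def IsDecomp (g x y : List (Fin 2) → List (Fin 2)) (s : Bool) : Prop :=
  ∀ w, g ((if s then 1 else 0) :: w) = 0 :: x w ∧ g ((if s then 0 else 1) :: w) = 1 :: y w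

namespace IsDecomp

variable {g g' x x' y y' : List (Fin 2) → List (Fin 2)} {s s' : Bool}

lemma unique (h : IsDecomp g x y s) (h' : IsDecomp g x' y' s') :
    x = x' ∧ y = y' ∧ s = s' := by
  have hs : s = s' := by
    have h₁ := (h []).1
    have h₂ := (h' []).2
    cases s <;> cases s' <;> simp_all
  subst hs
  refine ⟨funext fun w => ?_, funext fun w => ?_, rfl⟩
  · simpa using (h w).1.symm.trans (h' w).1
  · simpa using (h w).2.symm.trans (h' w).2

lemma eq_of_nil (h : IsDecomp g x y s) (h' : IsDecomp g' x y s) (h₀ : g [] = g' []) :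
    g = g' := by
  funext w
  cases w with
  | nil => exact h₀
  | cons i w =>
    have h₁ := (h w).1.trans (h' w).1.symm
    have h₂ := (h w).2.trans (h' w).2.symm
    fin_cases i <;> cases s <;> simp_all

lemma basilicaA_comp_iff :
    IsDecomp (basilicaA ∘ g) (basilicaB ∘ x) y s ↔ IsDecomp g x y s := by
  refine forall_congr' fun w => ?_
  have h₀ : (0 : Fin 2) :: basilicaB (x w) = basilicaA (0 :: x w) := by simp [basilicaA]
  have h₁ : (1 : Fin 2) :: y w = basilicaA (1 :: y w) := by simp [basilicaA]
  simp only [Function.comp_apply]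
  rw [h₀, h₁, basilicaA_injective.eq_iff, basilicaA_injective.eq_iff, ← h₁]

lemma basilicaB_comp_iff :
    IsDecomp (basilicaB ∘ g) y (basilicaA ∘ x) (!s) ↔ IsDecomp g x y s := by
  refine forall_congr' fun w => ?_
  have h₀ : (0 : Fin 2) :: y w = basilicaB (1 :: y w) := by simp [basilicaB]
  have h₁ : (1 : Fin 2) :: basilicaA (x w) = basilicaB (0 :: x w) := by simp [basilicaB]
  simp only [Function.comp_apply]
  rw [h₀, h₁, basilicaB_injective.eq_iff, basilicaB_injective.eq_iff, and_comm]
  cases s <;> simp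

end IsDecomp

/-- The maps `a`, `b` given by the Basilica wreath recursion are automorphisms of the
rooted binary tree, and the Basilica group — the subgroup of `Aut(T)` they generate — is
amenable: it satisfies Reiter's condition. -/
theorem basilica_amenable :
    ∃ A B : TreeAut (Fin 2),
      (∀ w, (A : Equiv.Perm (List (Fin 2))) w = basilicaA w) ∧
      (∀ w, (B : Equiv.Perm (List (Fin 2))) w = basilicaB w) ∧
      ReiterCondition ↥(Subgroup.closure {A, B}) := by
  obtain ⟨A, hA₀⟩ : ∃ A : TreeAut (Fin 2), ⇑(A : Equiv.Perm (List (Fin 2))) = basilicaA :=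
    ⟨TreeAut.ofSurjective basilicaA (fun w => (basilica_length w).1)
      (fun w w' => (basilica_prefix_iff w w').1) (fun w => (basilica_surjective w).1), rfl⟩
  obtain ⟨B, hB₀⟩ : ∃ B : TreeAut (Fin 2), ⇑(B : Equiv.Perm (List (Fin 2))) = basilicaB :=
    ⟨TreeAut.ofSurjective basilicaB (fun w => (basilica_length w).2)
      (fun w w' => (basilica_prefix_iff w w').2) (fun w => (basilica_surjective w).2), rfl⟩
  refine ⟨A, B, congrFun hA₀, congrFun hB₀, ?_⟩
  set G := Subgroup.closure {A, B}
  let a : G := ⟨A, Subgroup.subset_closure (by simp)⟩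
  let b : G := ⟨B, Subgroup.subset_closure (by simp)⟩
  let act : G → List (Fin 2) → List (Fin 2) := fun g => ⇑((g : TreeAut (Fin 2)) : Equiv.Perm _)
  have hact : ∀ {g h}, act g = act h → g = h := fun e =>
    Subtype.ext (Subtype.ext (DFunLike.coe_injective e))
  have hA : ∀ g, act (a * g) = basilicaA ∘ act g := fun g => by rw [← hA₀]; rfl
  have hB : ∀ g, act (b * g) = basilicaB ∘ act g := fun g => by rw [← hB₀]; rfl
  have hgen : Subgroup.closure {a, b} = ⊤ := by
    have h : ({a, b} : Set G) = Subtype.val ⁻¹' ({A, B} : Set (TreeAut (Fin 2))) := by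
      ext g
      simp only [Set.mem_preimage, Set.mem_insert_iff, Set.mem_singleton_iff, Subtype.ext_iff,
        a, b]
    rw [h]
    exact Subgroup.closure_closure_coe_preimage
  have hex : ∀ g : G, ∃ (x y : G) (s : Bool), IsDecomp (act g) (act x) (act y) s := by
    intro g
    have hg : g ∈ Subgroup.closure {a, b} := hgen ▸ Subgroup.mem_top g
    induction hg using Subgroup.closure_induction_left with
    | one => exact ⟨1, 1, false, fun w => ⟨rfl, rfl⟩⟩
    | mul_left t ht g hg ih =>
      obtain ⟨x, y, s, h⟩ := ih
      rcases ht with rfl | rfl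
      · exact ⟨b * x, y, s, by rwa [hA, hB, IsDecomp.basilicaA_comp_iff]⟩
      · exact ⟨y, a * x, !s, by rwa [hA, hB, IsDecomp.basilicaB_comp_iff]⟩
    | inv_mul_cancel t ht g hg ih =>
      obtain ⟨x, y, s, h⟩ := ih
      rcases ht with rfl | rfl
      · refine ⟨b⁻¹ * x, y, s, IsDecomp.basilicaA_comp_iff.1 ?_⟩
        rwa [← hA, ← hB, mul_inv_cancel_left, mul_inv_cancel_left]
      · refine ⟨a⁻¹ * y, x, !s, IsDecomp.basilicaB_comp_iff.1 ?_⟩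
        rwa [← hA, ← hB, mul_inv_cancel_left, mul_inv_cancel_left, Bool.not_not]
  choose x y s hdec using hex
  have huniq : ∀ {g x' y' : G} {s' : Bool}, IsDecomp (act g) (act x') (act y') s' →
      x g = x' ∧ y g = y' := fun {g _ _ _} h => by
    obtain ⟨h₁, h₂, -⟩ := (hdec g).unique h
    exact ⟨hact h₁, hact h₂⟩
  have ha : ∀ g : G, x (a * g) = b * x g ∧ y (a * g) = y g := fun g =>
    huniq (by rw [hA, hB, IsDecomp.basilicaA_comp_iff]; exact hdec g)
  have hb : ∀ g : G, x (b * g) = y g ∧ y (b * g) = a * x g := fun g =>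
    huniq (by rw [hA, hB, IsDecomp.basilicaB_comp_iff]; exact hdec g)
  refine reiterCondition_of_wreathRecursion (x := x) (y := y) (s := s) hgen ?_
    (fun g => (ha g).1) (fun g => (ha g).2) (fun g => (hb g).1) (fun g => (hb g).2)
  intro g h hx hy hs
  refine hact ((hdec g).eq_of_nil (by rw [hx, hy, hs]; exact hdec h) ?_)
  have hnil : ∀ k : G, act k [] = [] := fun k => List.length_eq_zero_iff.1 (k.1.2.1 [])
  rw [hnil, hnil]
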